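/- Let s₀ > 1 be a real number, and let a, b, c, d be nonnegative integers with a > 0, c > 0, ad < bc, and a + b < c + d. If either (a+b)^{s₀}·ζ(s₀) < (c+d)^{s₀} or a + b < (c+d)·(1 − 1/s₀), then σ_s(an+b) < σ_s(cn+d) for every positive integer n and every real number s ≥ s₀. -/

import Mathlib

/-!
Pairing each divisor of `m` with its cofactor gives `σ_s(m) = m^s ∑_{d ∣ m} d^{-s}`, so that
`m^s ≤ σ_s(m) ≤ m^s ζ(s)` (`rpow_le_sigmaR`, `sigmaR_le`). It therefore suffices that
`((an+b)/(cn+d))^s ζ(s) < 1`. As `ad < bc`, the quotient `(an+b)/(cn+d)` decreases with `n` and is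
at most its value `r = (a+b)/(c+d) < 1` at `n = 1`; both `r^s` and `ζ(s)` decrease with `s`, so
everything reduces to `r^{s₀} ζ(s₀) < 1`. This is the first alternative of the hypothesis. The
second one, `r < 1 - 1/s₀`, implies it, because `ζ(s₀) ≤ s₀/(s₀-1)` (`zetaR_mul_le`) gives
`r ζ(s₀) < 1`, while `r^{s₀} ≤ r`.
-/

/-- `σ_s(n) = ∑_{d ∣ n} d^s` over the positive divisors of `n`. -/
noncomputable def sigmaR (s : ℝ) (n : ℕ) : ℝ := ∑ d ∈ n.divisors, (d : ℝ) ^ s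

/-- `ζ(t) = ∑_{k=1}^∞ k^{-t}` for real `t`. -/
noncomputable def zetaR (t : ℝ) : ℝ := ∑' k : ℕ, ((k : ℝ) + 1) ^ (-t)

lemma summable_zetaR {s : ℝ} (hs : 1 < s) : Summable fun k : ℕ => ((k : ℝ) + 1) ^ (-s) := by
  have h := (summable_nat_add_iff 1).mpr (Real.summable_nat_rpow.mpr (neg_lt_neg hs))
  exact_mod_cast h

lemma zetaR_nonneg (s : ℝ) : 0 ≤ zetaR s := tsum_nonneg fun k => by positivity

lemma zetaR_anti {s t : ℝ} (hs : 1 < s) (hst : s ≤ t) : zetaR t ≤ zetaR s := by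
  refine (summable_zetaR (hs.trans_le hst)).tsum_le_tsum (fun k => ?_) (summable_zetaR hs)
  exact Real.rpow_le_rpow_of_exponent_le (by simp) (neg_le_neg hst)

/-- The bound `ζ(s) ≤ s / (s - 1) = 1 / (1 - 1/s)`, in multiplied-out form. It comes from Mathlib's
formula `ζ(s) - 1/(s-1) = 1 - s ∑ₙ ∫ₙⁿ⁺¹ (x - n) x^{-s-1} dx`, whose integrals are nonnegative. -/
lemma zetaR_mul_le {s : ℝ} (hs : 1 < s) : (1 - 1 / s) * zetaR s ≤ 1 := by
  have h := ZetaAsymptotics.zeta_limit_aux1 hs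
  have hz : zetaR s = ∑' n : ℕ, 1 / ((n : ℝ) + 1) ^ s :=
    tsum_congr fun k => by rw [Real.rpow_neg (by positivity), one_div]
  have ht : 0 ≤ ZetaAsymptotics.termTSum s :=
    tsum_nonneg fun n => ZetaAsymptotics.term_nonneg _ _
  rw [← hz] at h
  have hst : 0 ≤ s * ZetaAsymptotics.termTSum s := by positivity
  have hs1 : 0 < s - 1 := by linarith
  have hle : zetaR s ≤ s / (s - 1) := by
    have : s / (s - 1) = 1 + 1 / (s - 1) := by field_simp; ring
    linarith
  calc (1 - 1 / s) * zetaR s = (s - 1) / s * zetaR s := by field_simp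
    _ ≤ (s - 1) / s * (s / (s - 1)) := by gcongr
    _ = 1 := by field_simp

lemma rpow_le_sigmaR (s : ℝ) {m : ℕ} (hm : 0 < m) : (m : ℝ) ^ s ≤ sigmaR s m :=
  Finset.single_le_sum (f := fun d : ℕ => (d : ℝ) ^ s) (fun d _ => by positivity)
    (Nat.mem_divisors_self m hm.ne')

lemma sigmaR_le {s : ℝ} (hs : 1 < s) (m : ℕ) : sigmaR s m ≤ (m : ℝ) ^ s * zetaR s := by
  have h1 : sigmaR s m = (m : ℝ) ^ s * ∑ d ∈ m.divisors, (d : ℝ) ^ (-s) := by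
    rw [sigmaR, ← Nat.sum_div_divisors, Finset.mul_sum]
    refine Finset.sum_congr rfl fun d hd => ?_
    have hd0 : d ≠ 0 := (Nat.pos_of_mem_divisors hd).ne'
    rw [Nat.cast_div (Nat.dvd_of_mem_divisors hd) (by exact_mod_cast hd0),
      Real.div_rpow (by positivity) (by positivity), Real.rpow_neg (by positivity), div_eq_mul_inv]
  rw [h1]
  gcongr
  -- The series `zetaR` is indexed from `0`, with `k` standing for the divisor `k + 1`.
  have h2 : ∑ d ∈ m.divisors, (d : ℝ) ^ (-s)
      = ∑ k ∈ m.divisors.image Nat.pred, ((k : ℝ) + 1) ^ (-s) := by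
    rw [Finset.sum_image]
    · refine Finset.sum_congr rfl fun d hd => ?_
      obtain ⟨e, rfl⟩ := Nat.exists_eq_succ_of_ne_zero (Nat.pos_of_mem_divisors hd).ne'
      simp
    · intro x hx y hy hxy
      exact Nat.pred_inj (Nat.pos_of_mem_divisors hx) (Nat.pos_of_mem_divisors hy) hxy
  rw [h2]
  exact (summable_zetaR hs).sum_le_tsum _ fun k _ => by positivity

theorem stmt_14 (s₀ : ℝ) (hs₀ : 1 < s₀) (a b c d : ℕ)
    (ha : 0 < a) (hc : 0 < c) (habcd : a * d < b * c) (hsum : a + b < c + d)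
    (hyp : ((a : ℝ) + b) ^ s₀ * zetaR s₀ < ((c : ℝ) + d) ^ s₀ ∨
           (a : ℝ) + b < ((c : ℝ) + d) * (1 - 1 / s₀)) :
    ∀ n : ℕ, 0 < n → ∀ s : ℝ, s₀ ≤ s →
      sigmaR s (a * n + b) < sigmaR s (c * n + d) := by
  intro n hn s hs
  have hs1 : 1 < s := hs₀.trans_le hs
  have hp : (0 : ℝ) < (a : ℝ) + b := by positivity
  have hq : (0 : ℝ) < (c : ℝ) + d := by positivity
  set r : ℝ := ((a : ℝ) + b) / ((c : ℝ) + d) with hr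
  have hr0 : 0 < r := div_pos hp hq
  have hr1 : r < 1 := (div_lt_one hq).mpr (by exact_mod_cast hsum)
  have key₀ : r ^ s₀ * zetaR s₀ < 1 := by
    rcases hyp with h | h
    · rw [hr, Real.div_rpow hp.le hq.le, div_mul_eq_mul_div, div_lt_one (by positivity)]
      exact h
    · have hlt : r < 1 - 1 / s₀ := by rw [hr, div_lt_iff₀ hq]; linarith
      have hrs : r ^ s₀ ≤ r := by
        simpa using Real.rpow_le_rpow_of_exponent_ge hr0 hr1.le hs₀.le
      have hle := zetaR_mul_le hs₀
      rcases (zetaR_nonneg s₀).eq_or_lt with h0 | h0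
      · simp [← h0]
      · nlinarith [mul_le_mul_of_nonneg_right hrs h0.le, mul_lt_mul_of_pos_right hlt h0]
  have key : r ^ s * zetaR s < 1 := by
    refine lt_of_le_of_lt (mul_le_mul ?_ (zetaR_anti hs₀ hs) (zetaR_nonneg s) ?_) key₀
    · exact Real.rpow_le_rpow_of_exponent_ge hr0 hr1.le hs
    · positivity
  have hM : 0 < c * n + d := by positivity
  have hMs : (0 : ℝ) < ((c * n + d : ℕ) : ℝ) ^ s := Real.rpow_pos_of_pos (by exact_mod_cast hM) s
  have hratio : ((a * n + b : ℕ) : ℝ) ≤ r * ((c * n + d : ℕ) : ℝ) := by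
    rw [hr, div_mul_eq_mul_div, le_div_iff₀ hq]
    have h1 : (1 : ℝ) ≤ n := by exact_mod_cast hn
    have h2 : (a : ℝ) * d ≤ b * c := by exact_mod_cast habcd.le
    push_cast
    -- The difference of the two sides is `(n - 1) (bc - ad)`.
    nlinarith [mul_nonneg (sub_nonneg.mpr h1) (sub_nonneg.mpr h2)]
  calc sigmaR s (a * n + b) ≤ ((a * n + b : ℕ) : ℝ) ^ s * zetaR s := sigmaR_le hs1 _
    _ ≤ (r * ((c * n + d : ℕ) : ℝ)) ^ s * zetaR s := by
        have := zetaR_nonneg s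
        gcongr
    _ = (r ^ s * zetaR s) * ((c * n + d : ℕ) : ℝ) ^ s := by
        rw [Real.mul_rpow hr0.le (Nat.cast_nonneg _)]; ring
    _ < 1 * ((c * n + d : ℕ) : ℝ) ^ s := by gcongr
    _ ≤ sigmaR s (c * n + d) := by rw [one_mul]; exact rpow_le_sigmaR s hM
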